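/- Let G be a finite subgroup of SL(4,ℂ) acting irreducibly on ℂ⁴ and having no nonzero semi-invariant homogeneous polynomial of degree 2. Let C = {[s³ : s²t : st² : t³] : (s,t) ∈ ℂ² ∖ {0}} ⊂ ℙ³(ℂ) be the twisted cubic curve, and suppose the action of Ḡ (the image of G in PGL(4,ℂ)) on ℙ³(ℂ) maps C onto itself. Then Ḡ is isomorphic to the alternating group A₅. -/

import Mathlib

open Matrix

/-- The twisted cubic curve in `ℙ³(ℂ)`, the image of `(s : t) ↦ (s³ : s²t : st² : t³)`. -/
def twistedCubic : Set (Projectivization ℂ (Fin 4 → ℂ)) :=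
  {p | ∃ (s t : ℂ) (h : (![s ^ 3, s ^ 2 * t, s * t ^ 2, t ^ 3] : Fin 4 → ℂ) ≠ 0),
    p = Projectivization.mk ℂ (![s ^ 3, s ^ 2 * t, s * t ^ 2, t ^ 3]) h}

/-!
A linear automorphism of the twisted cubic is the symmetric cube of an automorphism of `ℙ¹`, so the
group is the image of a finite group `H` of homographies of `ℙ¹`. An `H`-orbit of at most three
points would span an invariant subspace of dimension at most three, against irreducibility. An
`H`-orbit of six points is the zero set of a binary sextic, which is the restriction to the cubic of
a quadric; averaging that quadric over the group gives a quadratic semi-invariant, which is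
excluded too. Every nontrivial homography of finite order has exactly two fixed points, so counting
the points with nontrivial stabilizer as in Klein's classification leaves only three exceptional
orbits, of sizes 12, 20 and 30, in a group of order 60, and such a group is `A₅`.
-/

section TwoFixedPoints

open MulAction

variable {H X : Type*} [Group H] [MulAction H X]

variable (H X) in
/-- The points of `X` with nontrivial stabilizer, as an `H`-stable subset. -/
def specialPoints : SubMulAction H X where
  carrier := {x | stabilizer H x ≠ ⊥}
  smul_mem' h x hx := by
    rwa [Set.mem_ofPred_eq, stabilizer_smul_eq_stabilizer_map_conj, Ne,
      Subgroup.map_eq_bot_iff_of_injective _ (MulAut.conj h).injective]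

lemma mem_specialPoints {x : X} : x ∈ specialPoints H X ↔ ∃ h : H, h ≠ 1 ∧ x ∈ fixedBy X h := by
  change stabilizer H x ≠ ⊥ ↔ _
  simp [Subgroup.ne_bot_iff_exists_ne_one, and_comm]

lemma stabilizer_specialPoints_ne_bot (x : specialPoints H X) : stabilizer H x ≠ ⊥ := by
  rw [SubMulAction.stabilizer_of_subMul]
  exact x.2

variable (H X) in
/-- Every nontrivial element of `H` has exactly two fixed points on `X`, as is the case for a
finite group of homographies of the projective line. -/
def FixesTwoPoints : Prop := ∀ h : H, h ≠ 1 → (fixedBy X h).ncard = 2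

namespace FixesTwoPoints

lemma fixedBy_finite (h2 : FixesTwoPoints H X) {h : H} (hh : h ≠ 1) : (fixedBy X h).Finite :=
  Set.finite_of_ncard_ne_zero (by rw [h2 h hh]; norm_num)

lemma exists_mem_stabilizer (h2 : FixesTwoPoints H X) {h : H} (hh : h ≠ 1) :
    ∃ x : X, h ∈ stabilizer H x :=
  Set.nonempty_of_ncard_ne_zero (s := fixedBy X h) (by rw [h2 h hh]; norm_num)

lemma subgroup (h2 : FixesTwoPoints H X) (M : Subgroup H) : FixesTwoPoints M X :=
  fun m hm => h2 m (by simpa using hm)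

lemma finite_specialPoints [Finite H] (h2 : FixesTwoPoints H X) : Finite (specialPoints H X) := by
  refine (Set.finite_iUnion fun h : {h : H // h ≠ 1} => h2.fixedBy_finite h.2).subset
    fun x hx => ?_
  obtain ⟨h, hh, hfix⟩ := mem_specialPoints.mp hx
  exact Set.mem_iUnion.mpr ⟨⟨h, hh⟩, hfix⟩

lemma restrict_specialPoints (h2 : FixesTwoPoints H X) :
    FixesTwoPoints H (specialPoints H X) := by
  intro h hh
  rw [← h2 h hh, ← Set.ncard_image_of_injective _ Subtype.val_injective]
  congr 1
  ext x
  refine ⟨?_, fun hx => ⟨⟨x, mem_specialPoints.mpr ⟨h, hh, hx⟩⟩, Subtype.ext hx, rfl⟩⟩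
  rintro ⟨y, hy, rfl⟩
  exact congrArg Subtype.val hy

lemma card_add_eq_card_orbits_mul [Finite H] [Finite X] (h2 : FixesTwoPoints H X) :
    Nat.card X + 2 * Nat.card H = Nat.card (orbitRel.Quotient H X) * Nat.card H + 2 := by
  classical
  have := Fintype.ofFinite H
  have := Fintype.ofFinite X
  have := Fintype.ofFinite (orbitRel.Quotient H X)
  have hburnside : ∑ h : H, Fintype.card (fixedBy X h)
      = Nat.card (orbitRel.Quotient H X) * Nat.card H := by
    rw [Nat.card_eq_fintype_card, Nat.card_eq_fintype_card]
    exact sum_card_fixedBy_eq_card_orbits_mul_card_group H X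
  have hone : Fintype.card (fixedBy X (1 : H)) = Nat.card X := by
    rw [← Nat.card_eq_fintype_card, Nat.card_coe_set_eq, fixedBy_one_eq_univ, Set.ncard_univ]
  have hsum : ∑ h ∈ Finset.univ.erase (1 : H), Fintype.card (fixedBy X h)
      = (Nat.card H - 1) * 2 := by
    rw [Finset.sum_const_nat fun h hh => ?_, Finset.card_erase_of_mem (Finset.mem_univ _),
      Finset.card_univ, Nat.card_eq_fintype_card]
    rw [← Nat.card_eq_fintype_card, Nat.card_coe_set_eq, h2 h (Finset.ne_of_mem_erase hh)]
  rw [← Finset.add_sum_erase _ _ (Finset.mem_univ (1 : H)), hone, hsum] at hburnside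
  have hpos : 0 < Nat.card H := Nat.card_pos
  omega

lemma sum_card_stabilizer_le [Finite H] (h2 : FixesTwoPoints H X) (Y : Finset X) :
    ∑ y ∈ Y, (Nat.card (stabilizer H y) - 1) ≤ 2 * (Nat.card H - 1) := by
  classical
  have := Fintype.ofFinite H
  have hstab : ∀ y : X, Nat.card (stabilizer H y) - 1
      = ((Finset.univ.erase (1 : H)).filter fun h => h • y = y).card := by
    intro y
    rw [Finset.filter_erase, Finset.card_erase_of_mem (by simp), Nat.card_eq_fintype_card,
      Fintype.card_subtype]
    rfl
  calc ∑ y ∈ Y, (Nat.card (stabilizer H y) - 1)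
      = ∑ h ∈ Finset.univ.erase (1 : H), (Y.filter fun y => h • y = y).card := by
        simp_rw [hstab]
        exact Finset.sum_card_bipartiteAbove_eq_sum_card_bipartiteBelow
          (fun (y : X) (h : H) => h • y = y)
    _ ≤ ∑ _h ∈ Finset.univ.erase (1 : H), 2 := by
        refine Finset.sum_le_sum fun h hh => ?_
        have hh1 := Finset.ne_of_mem_erase hh
        rw [← h2 h hh1, ← Set.ncard_coe_finset]
        exact Set.ncard_le_ncard (fun y hy => (Finset.mem_filter.mp hy).2) (h2.fixedBy_finite hh1)
    _ = 2 * (Nat.card H - 1) := by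
        rw [Finset.sum_const, Finset.card_erase_of_mem (Finset.mem_univ _), Finset.card_univ,
          Nat.card_eq_fintype_card, smul_eq_mul, mul_comm]

end FixesTwoPoints

lemma ncard_orbit_mul_card_stabilizer (x : X) :
    (orbit H x).ncard * Nat.card (stabilizer H x) = Nat.card H := by
  rw [← index_stabilizer, Subgroup.index_mul_card]

lemma two_mul_ncard_orbit_le [Finite H] {x : X} (hx : stabilizer H x ≠ ⊥) :
    2 * (orbit H x).ncard ≤ Nat.card H := by
  rw [← ncard_orbit_mul_card_stabilizer x, mul_comm]
  exact Nat.mul_le_mul_left _ ((Subgroup.one_lt_card_iff_ne_bot _).mpr hx)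

lemma natCard_eq_sum_ncard_orbits [Finite X] [Fintype (orbitRel.Quotient H X)] :
    Nat.card X = ∑ ω : orbitRel.Quotient H X, ω.orbit.ncard := by
  rw [Nat.card_congr (selfEquivSigmaOrbits' H X), Nat.card_sigma]
  simp only [Nat.card_coe_set_eq]

-- Writing `a = N / l`, `b = N / m`, `c = N / n`, this is Klein's equation
-- `1 / l + 1 / m + 1 / n = 1 + 2 / N`, of which only the icosahedral solution survives.
lemma icosahedral_of_add_eq {N a b c : ℕ} (ha : a ∣ N) (hb : b ∣ N) (hc : c ∣ N)
    (hab : a ≤ b) (hbc : b ≤ c) (hcN : 2 * c ≤ N) (hsum : a + b + c = N + 2)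
    (ha3 : 3 ≤ a) (ha6 : a ≠ 6) (hc6 : c ≠ 6) :
    N = 60 ∧ a = 12 ∧ b = 20 ∧ c = 30 := by
  obtain ⟨l, rfl⟩ := ha
  obtain ⟨m, hm⟩ := hb
  obtain ⟨n, hn⟩ := hc
  have hn2 : n = 2 := by
    have : n < 3 := by by_contra! h; nlinarith
    have : 2 ≤ n := by by_contra! h; nlinarith
    omega
  subst hn2
  have hm3 : m = 3 := by
    have : m < 4 := by by_contra! h; nlinarith
    have : m ≠ 2 := by rintro rfl; omega
    have : 1 < m := by by_contra! h; nlinarith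
    omega
  subst hm3
  have hl : l < 6 := by by_contra! h; nlinarith
  interval_cases l <;> omega

lemma icosahedral_of_sum_eq {ι : Type*} [Fintype ι] (hι : Nat.card ι = 3) {N : ℕ} {o : ι → ℕ}
    (hdvd : ∀ i, o i ∣ N) (hle : ∀ i, 2 * o i ≤ N) (hsum : ∑ i, o i = N + 2)
    (h3 : ∀ i, 3 ≤ o i) (h6 : ∀ i, o i ≠ 6) :
    N = 60 ∧ ∃ e : Fin 3 ≃ ι, o ∘ e = ![12, 20, 30] := by
  let e₀ : Fin 3 ≃ ι := (Finite.equivFinOfCardEq hι).symm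
  let e := (Tuple.sort (o ∘ e₀)).trans e₀
  have hmono : Monotone (o ∘ e) := Tuple.monotone_sort (o ∘ e₀)
  rw [← e.sum_comp, Fin.sum_univ_three] at hsum
  obtain ⟨hN, h₀, h₁, h₂⟩ := icosahedral_of_add_eq (hdvd (e 0)) (hdvd (e 1)) (hdvd (e 2))
    (hmono (by decide : (0 : Fin 3) ≤ 1)) (hmono (by decide : (1 : Fin 3) ≤ 2)) (hle _) hsum
    (h3 _) (h6 _) (h6 _)
  refine ⟨hN, e, funext fun i => ?_⟩
  fin_cases i
  exacts [h₀, h₁, h₂]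

namespace FixesTwoPoints

lemma card_orbits_eq_three [Finite H] [Finite X] [Nontrivial H] (h2 : FixesTwoPoints H X)
    (hstab : ∀ x : X, stabilizer H x ≠ ⊥) (h3 : ∀ x : X, 3 ≤ (orbit H x).ncard) :
    Nat.card (orbitRel.Quotient H X) = 3 := by
  have := Fintype.ofFinite (orbitRel.Quotient H X)
  have hcount := h2.card_add_eq_card_orbits_mul
  have hN : 2 ≤ Nat.card H := Finite.one_lt_card
  have hupper : 2 * Nat.card X ≤ Nat.card (orbitRel.Quotient H X) * Nat.card H := by
    rw [natCard_eq_sum_ncard_orbits (H := H), Finset.mul_sum, Nat.card_eq_fintype_card,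
      ← Finset.card_univ]
    exact Finset.sum_le_card_nsmul _ _ _ fun ω _ =>
      ω.inductionOn' fun x => two_mul_ncard_orbit_le (hstab x)
  have hlower : Nat.card (orbitRel.Quotient H X) * 3 ≤ Nat.card X := by
    rw [natCard_eq_sum_ncard_orbits (H := H) (X := X), Nat.card_eq_fintype_card,
      ← Finset.card_univ, ← smul_eq_mul]
    exact Finset.card_nsmul_le_sum _ _ _ fun ω _ => ω.inductionOn' fun x => h3 x
  generalize Nat.card (orbitRel.Quotient H X) = k at *
  have : k < 4 := by by_contra! h; nlinarith
  interval_cases k <;> omega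

end FixesTwoPoints

variable (H X) in
/-- The action of the rotation group of the icosahedron on its vertices, face centres and edge
midpoints, characterized by its stabilizers. -/
structure IsIcosahedralAction : Prop where
  fixesTwoPoints : FixesTwoPoints H X
  card_eq : Nat.card H = 60
  prime_card_stabilizer (x : X) : (Nat.card (stabilizer H x)).Prime
  mem_orbit_of_card_eq {x y : X} :
    Nat.card (stabilizer H x) = Nat.card (stabilizer H y) → y ∈ orbit H x

lemma FixesTwoPoints.isIcosahedralAction [Finite H] [Finite X] [Nontrivial H]
    (h2 : FixesTwoPoints H X) (hstab : ∀ x : X, stabilizer H x ≠ ⊥)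
    (h3 : ∀ x : X, 3 ≤ (orbit H x).ncard) (h6 : ∀ x : X, (orbit H x).ncard ≠ 6) :
    IsIcosahedralAction H X := by
  have := Fintype.ofFinite (orbitRel.Quotient H X)
  have hcount := h2.card_add_eq_card_orbits_mul
  have hk := h2.card_orbits_eq_three hstab h3
  have hN : 2 ≤ Nat.card H := Finite.one_lt_card
  rw [hk, natCard_eq_sum_ncard_orbits (H := H)] at hcount
  obtain ⟨hN, e, he⟩ := icosahedral_of_sum_eq hk
    (o := fun ω : orbitRel.Quotient H X => ω.orbit.ncard) (N := Nat.card H)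
    (fun ω => ω.inductionOn' fun x => Dvd.intro _ (ncard_orbit_mul_card_stabilizer x))
    (fun ω => ω.inductionOn' fun x => two_mul_ncard_orbit_le (hstab x)) (by omega)
    (fun ω => ω.inductionOn' h3) (fun ω => ω.inductionOn' h6)
  have horb (x : X) : ∃ i, e i = Quotient.mk'' x ∧
      (![12, 20, 30] : Fin 3 → ℕ) i * Nat.card (stabilizer H x) = 60 := by
    obtain ⟨i, hi⟩ := e.surjective (Quotient.mk'' x)
    refine ⟨i, hi, ?_⟩
    rw [← he, Function.comp_apply, hi, ← hN]
    exact ncard_orbit_mul_card_stabilizer x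
  refine ⟨h2, hN, fun x => ?_, fun {x y} hxy => ?_⟩
  · obtain ⟨i, -, hi⟩ := horb x
    have hmem : Nat.card (stabilizer H x) ∈ ({2, 3, 5} : Finset ℕ) := by
      fin_cases i <;> simp at hi ⊢ <;> omega
    exact (by decide : ∀ p ∈ ({2, 3, 5} : Finset ℕ), p.Prime) _ hmem
  · obtain ⟨i, hi, hix⟩ := horb x
    obtain ⟨j, hj, hjy⟩ := horb y
    obtain rfl : i = j := by
      rw [hxy] at hix
      fin_cases i <;> fin_cases j <;> simp at hix hjy ⊢ <;> omega
    exact orbitRel_apply.mp (Quotient.exact' (hj.symm.trans hi))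

-- By Burnside's fusion theorem the normalizer already acts transitively on `P \ {1}`.
lemma card_sylow_sub_one_dvd_card_normalizer {p : ℕ} [Fact p.Prime] [Finite H] (P : Sylow p H)
    [IsMulCommutative P] {t : H} (htP : t ∈ P) (ht : t ≠ 1)
    (hconj : ∀ s ∈ P, s ≠ 1 → IsConj s t) :
    Nat.card P - 1 ∣ Nat.card (Subgroup.normalizer ((P : Subgroup H) : Set H)) := by
  let t' : (P : Subgroup H) := ⟨t, htP⟩
  have horbit : orbit (Subgroup.normalizer ((P : Subgroup H) : Set H)) t' = {1}ᶜ := by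
    ext s
    constructor
    · rintro ⟨n, rfl⟩ hs
      exact ht (congrArg Subtype.val (smul_eq_iff_eq_inv_smul n |>.mp hs |>.trans (smul_one _)))
    · intro hs
      obtain ⟨g, hg⟩ := isConj_iff.mp (hconj s s.2 (by simpa using hs)).symm
      obtain ⟨n, hn, hn'⟩ := P.conj_eq_normalizer_conj_of_mem t g⁻¹ htP (by
        rw [inv_inv, hg]
        exact s.2)
      refine ⟨⟨n⁻¹, inv_mem hn⟩, Subtype.ext ?_⟩
      change n⁻¹ * t * n⁻¹⁻¹ = s
      rw [inv_inv, ← hn', inv_inv, hg]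
  have hcard : (orbit (Subgroup.normalizer ((P : Subgroup H) : Set H)) t').ncard
      = Nat.card P - 1 := by
    rw [horbit, Set.ncard_compl, Set.ncard_singleton]
  exact hcard ▸ Dvd.intro _ (ncard_orbit_mul_card_stabilizer _)

lemma nonempty_mulEquiv_alternatingGroup {n : ℕ} (S : Subgroup H) (hindex : S.index = n)
    (hcore : S.normalCore = ⊥) (hcard : 2 * Nat.card H = n.factorial) :
    Nonempty (H ≃* alternatingGroup (Fin n)) := by
  have hn : n ≠ 0 := by
    rintro rfl
    simp at hcard
  have : Finite (H ⧸ S) := Nat.finite_of_card_ne_zero (by rwa [← Subgroup.index_eq_card, hindex])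
  let e : H ⧸ S ≃ Fin n := Finite.equivFinOfCardEq (by rw [← Subgroup.index_eq_card, hindex])
  let φ : H →* Equiv.Perm (Fin n) := e.permCongrHom.toMonoidHom.comp (toPermHom H (H ⧸ S))
  have hφ : Function.Injective φ := e.permCongrHom.injective.comp
    ((MonoidHom.ker_eq_bot_iff _).mp (S.normalCore_eq_ker ▸ hcore))
  have hpos : 0 < Nat.card H := by
    have := n.factorial_pos
    omega
  have hrange : φ.range = alternatingGroup (Fin n) := by
    apply Equiv.Perm.eq_alternatingGroup_of_index_eq_two
    have := φ.range.card_mul_index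
    rw [Nat.card_congr (MonoidHom.ofInjective hφ).toEquiv.symm, Nat.card_perm, Nat.card_fin,
      ← hcard, mul_comm 2] at this
    exact Nat.eq_of_mul_eq_mul_left hpos this
  exact ⟨(MonoidHom.ofInjective hφ).trans (MulEquiv.subgroupCongr hrange)⟩

namespace IsIcosahedralAction

lemma finite (h : IsIcosahedralAction H X) : Finite H :=
  Nat.finite_of_card_ne_zero (by rw [h.card_eq]; norm_num)

lemma card_stabilizer_eq_orderOf (h : IsIcosahedralAction H X) {t : H} (ht : t ≠ 1) {x : X}
    (hx : t ∈ stabilizer H x) : Nat.card (stabilizer H x) = orderOf t :=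
  (((h.prime_card_stabilizer x).eq_one_or_self_of_dvd _
    (Subgroup.orderOf_dvd_natCard _ hx)).resolve_left (by rwa [orderOf_eq_one_iff])).symm

lemma prime_orderOf (h : IsIcosahedralAction H X) {t : H} (ht : t ≠ 1) : (orderOf t).Prime := by
  obtain ⟨x, hx⟩ := h.fixesTwoPoints.exists_mem_stabilizer ht
  exact h.card_stabilizer_eq_orderOf ht hx ▸ h.prime_card_stabilizer x

lemma isConj_of_orderOf_eq_two (h : IsIcosahedralAction H X) {s t : H} (hs : orderOf s = 2)
    (ht : orderOf t = 2) : IsConj s t := by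
  have hs1 : s ≠ 1 := by rintro rfl; simp at hs
  have ht1 : t ≠ 1 := by rintro rfl; simp at ht
  obtain ⟨x, hx⟩ := h.fixesTwoPoints.exists_mem_stabilizer hs1
  obtain ⟨y, hy⟩ := h.fixesTwoPoints.exists_mem_stabilizer ht1
  have hcx := h.card_stabilizer_eq_orderOf hs1 hx
  have hcy := h.card_stabilizer_eq_orderOf ht1 hy
  obtain ⟨k, rfl⟩ := h.mem_orbit_of_card_eq (hcx.trans (hs.trans (ht.symm.trans hcy.symm)))
  obtain ⟨u, -, hu⟩ := (Nat.card_eq_two_iff' (1 : stabilizer H (k • x))).mp (hcy.trans ht)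
  have hks : k * s * k⁻¹ ∈ stabilizer H (k • x) := by
    rw [stabilizer_smul_eq_stabilizer_map_conj]
    exact Subgroup.mem_map_of_mem _ hx
  have hks_eq := hu ⟨k * s * k⁻¹, hks⟩ (by simpa [Subtype.ext_iff] using hs1)
  have ht_eq := hu ⟨t, hy⟩ (by simpa [Subtype.ext_iff] using ht1)
  exact isConj_iff.mpr ⟨k, congrArg Subtype.val (hks_eq.trans ht_eq.symm)⟩

lemma exists_stabilizer_le_of_normal (h : IsIcosahedralAction H X) {M : Subgroup H} [M.Normal]
    (hM : M ≠ ⊥) : ∃ x : X, ∀ y ∈ orbit H x, stabilizer H y ≤ M := by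
  obtain ⟨⟨m, hmM⟩, hm⟩ := Subgroup.ne_bot_iff_exists_ne_one.mp hM
  have hm1 : m ≠ 1 := by simpa using hm
  obtain ⟨x, hx⟩ := h.fixesTwoPoints.exists_mem_stabilizer hm1
  have := Fact.mk (h.prime_card_stabilizer x)
  have hle : stabilizer H x ≤ M := by
    rw [← Subgroup.subgroupOf_eq_top]
    refine ((M.subgroupOf _).eq_bot_or_eq_top_of_prime_card).resolve_left fun hbot => hm1 ?_
    have hmem : (⟨m, hx⟩ : stabilizer H x) ∈ M.subgroupOf (stabilizer H x) := hmM
    rw [hbot] at hmem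
    simpa only [Subgroup.mem_bot, Subgroup.mk_eq_one] using hmem
  refine ⟨x, ?_⟩
  rintro _ ⟨k, rfl⟩
  change stabilizer H (k • x) ≤ M
  rw [stabilizer_smul_eq_stabilizer_map_conj]
  rintro _ ⟨s, hs, rfl⟩
  exact Subgroup.Normal.conj_mem inferInstance s (hle hs) k

lemma sixteen_le_card_of_normal (h : IsIcosahedralAction H X) {M : Subgroup H} [M.Normal]
    (hM : M ≠ ⊥) : 16 ≤ Nat.card M := by
  classical
  have := h.finite
  obtain ⟨x, hx⟩ := h.exists_stabilizer_le_of_normal hM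
  let Y : Finset X := (Set.finite_range fun g : H => g • x).toFinset
  have hYcard : Y.card * Nat.card (stabilizer H x) = 60 := by
    rw [← h.card_eq, ← Set.ncard_eq_toFinset_card _ (Set.finite_range _)]
    exact ncard_orbit_mul_card_stabilizer x
  have hstab : ∀ y ∈ Y, Nat.card (stabilizer M y) = Nat.card (stabilizer H x) := by
    intro y hy
    have hyx : y ∈ orbit H x := (Set.Finite.mem_toFinset _).mp hy
    have hsub : stabilizer M y = (stabilizer H y).subgroupOf M := rfl
    rw [hsub, Nat.card_congr (Subgroup.subgroupOfEquivOfLe (hx y hyx)).toEquiv]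
    obtain ⟨k, rfl⟩ := hyx
    exact (Nat.card_congr (stabilizerEquivStabilizer rfl).toEquiv).symm
  have hcount := (h.fixesTwoPoints.subgroup M).sum_card_stabilizer_le Y
  rw [Finset.sum_congr rfl fun y hy => congrArg (· - 1) (hstab y hy), Finset.sum_const,
    smul_eq_mul, Nat.mul_sub_one, hYcard] at hcount
  have hY30 : Y.card * 2 ≤ 60 := by
    rw [← hYcard]
    exact Nat.mul_le_mul_left _ (h.prime_card_stabilizer x).two_le
  omega

lemma card_sylow_two [Finite H] (h : IsIcosahedralAction H X)
    (P : Sylow 2 H) : Nat.card P = 2 ^ 2 := by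
  have hfact : (60 : ℕ).factorization 2 = 2 := by
    rw [show 60 = 2 ^ 2 * 15 by norm_num, Nat.factorization_mul (by norm_num) (by norm_num),
      Nat.factorization_pow]
    simp [Nat.Prime.factorization_self Nat.prime_two,
      Nat.factorization_eq_zero_of_not_dvd (by norm_num : ¬ 2 ∣ 15)]
  rw [P.card_eq_multiplicity, h.card_eq, hfact]

-- The subgroup is the normalizer of a Sylow `2`-subgroup, that is, a copy of `A₄`.
lemma exists_subgroup_index_eq_five (h : IsIcosahedralAction H X) :
    ∃ N : Subgroup H, N.index = 5 := by
  have := h.finite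
  obtain ⟨P⟩ : Nonempty (Sylow 2 H) := inferInstance
  have hP := h.card_sylow_two P
  have := IsPGroup.isMulCommutative_of_card_eq_prime_sq hP
  have hinv : ∀ s ∈ P, s ≠ 1 → orderOf s = 2 := fun s hsP hs =>
    (Nat.prime_dvd_prime_iff_eq (h.prime_orderOf hs) Nat.prime_two).mp
      ((h.prime_orderOf hs).dvd_of_dvd_pow (hP ▸ (P : Subgroup H).orderOf_dvd_natCard hsP))
  have hPbot : (P : Subgroup H) ≠ ⊥ := by
    rw [Ne, ← Subgroup.card_eq_one, hP]
    norm_num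
  obtain ⟨t, ht⟩ := Subgroup.ne_bot_iff_exists_ne_one.mp hPbot
  have ht1 : (t : H) ≠ 1 := by simpa using ht
  let N := Subgroup.normalizer ((P : Subgroup H) : Set H)
  have hthree : 2 ^ 2 - 1 ∣ Nat.card N := hP ▸ card_sylow_sub_one_dvd_card_normalizer P t.2 ht1
    fun s hsP hs => h.isConj_of_orderOf_eq_two (hinv s hsP hs) (hinv t t.2 ht1)
  have hfour : 2 ^ 2 ∣ Nat.card N := hP ▸ Subgroup.card_dvd_of_le Subgroup.le_normalizer
  have hcard := N.card_mul_index
  have hindex : N.index ≠ 1 := by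
    intro hN
    have := Subgroup.normalizer_eq_top_iff.mp (Subgroup.index_eq_one.mp hN)
    have := hP ▸ h.sixteen_le_card_of_normal hPbot
    omega
  obtain ⟨c, hc⟩ : 12 ∣ Nat.card N :=
    (by norm_num : Nat.Coprime 3 4).mul_dvd_of_dvd_of_dvd hthree hfour
  rw [h.card_eq, hc, mul_assoc] at hcard
  have hfive : c * N.index = 5 := by omega
  exact ⟨N, ((Nat.dvd_prime Nat.prime_five).mp (Dvd.intro_left c hfive)).resolve_left hindex⟩

theorem nonempty_mulEquiv_alternatingGroup (h : IsIcosahedralAction H X) :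
    Nonempty (H ≃* alternatingGroup (Fin 5)) := by
  obtain ⟨N, hN⟩ := h.exists_subgroup_index_eq_five
  refine _root_.nonempty_mulEquiv_alternatingGroup N hN ?_ (by rw [h.card_eq]; rfl)
  have := h.finite
  by_contra hcore
  have hlarge := h.sixteen_le_card_of_normal hcore
  have hsmall := Subgroup.card_le_of_le N.normalCore_le
  have hcard := N.card_mul_index
  rw [hN, h.card_eq] at hcard
  omega

end IsIcosahedralAction

lemma FixesTwoPoints.nonempty_mulEquiv_alternatingGroup [Finite H] [Nonempty X]
    (h2 : FixesTwoPoints H X) (h3 : ∀ x : X, 3 ≤ (orbit H x).ncard)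
    (h6 : ∀ x : X, (orbit H x).ncard ≠ 6) : Nonempty (H ≃* alternatingGroup (Fin 5)) := by
  have : Nontrivial H := by
    obtain ⟨x⟩ := ‹Nonempty X›
    refine Finite.one_lt_card_iff_nontrivial.mp ?_
    have hle : 3 ≤ Nat.card H := (h3 x).trans
      (Nat.le_of_dvd Nat.card_pos (Dvd.intro _ (ncard_orbit_mul_card_stabilizer x)))
    omega
  have := h2.finite_specialPoints
  have horbit (x : specialPoints H X) : (orbit H x).ncard = (orbit H (x : X)).ncard := by
    rw [← SubMulAction.val_image_orbit, Set.ncard_image_of_injective _ Subtype.val_injective]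
  exact (h2.restrict_specialPoints.isIcosahedralAction stabilizer_specialPoints_ne_bot
    (fun x => (h3 x).trans_eq (horbit x).symm)
    (fun x => (horbit x).trans_ne (h6 x))).nonempty_mulEquiv_alternatingGroup

end TwoFixedPoints

section ProjectiveLine

open MulAction
open scoped LinearAlgebra.Projectivization MatrixGroups

variable {K : Type*} [Field K]

lemma exists_mulVec_eq_smul_of_fin_two (A : Matrix (Fin 2) (Fin 2) K) {l : K}
    (hl : l ^ 2 - A.trace * l + A.det = 0) : ∃ v : Fin 2 → K, v ≠ 0 ∧ A *ᵥ v = l • v := by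
  have hdet : (A - scalar (Fin 2) l).det = 0 := by
    rw [← hl]
    simp [det_fin_two, trace_fin_two]
    ring
  obtain ⟨v, hv, hAv⟩ := exists_mulVec_eq_zero_iff.mpr hdet
  refine ⟨v, hv, ?_⟩
  rwa [sub_mulVec, scalar_apply, ← smul_one_eq_diagonal, smul_mulVec, one_mulVec,
    sub_eq_zero] at hAv

lemma exists_eigenbasis_of_discr_ne_zero [IsAlgClosed K] [NeZero (2 : K)]
    {A : Matrix (Fin 2) (Fin 2) K} (hA : A.discr ≠ 0) :
    ∃ (b : Module.Basis (Fin 2) K (Fin 2 → K)) (μ : Fin 2 → K),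
      μ 0 ≠ μ 1 ∧ ∀ i, A *ᵥ b i = μ i • b i := by
  have h2 : (2 : K) ≠ 0 := NeZero.ne 2
  obtain ⟨r, hr⟩ := IsAlgClosed.exists_pow_nat_eq A.discr two_pos
  have hr0 : r ≠ 0 := by
    rintro rfl
    exact hA (by simpa using hr.symm)
  rw [discr_fin_two] at hr
  let μ : Fin 2 → K := ![(A.trace + r) / 2, (A.trace - r) / 2]
  have hμ : μ 0 ≠ μ 1 := by
    have hsub : μ 0 - μ 1 = r := by
      simp [μ]
      field_simp
      ring
    rwa [Ne, ← sub_eq_zero, hsub]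
  have hroot : ∀ i, μ i ^ 2 - A.trace * μ i + A.det = 0 := by
    refine Fin.forall_fin_two.mpr ⟨?_, ?_⟩
    · simp [μ]
      field_simp
      linear_combination hr
    · simp [μ]
      field_simp
      linear_combination hr
  have hinj : Function.Injective μ := by
    intro i j hij
    fin_cases i <;> fin_cases j <;> simp_all
  choose v hv hAv using fun i => exists_mulVec_eq_smul_of_fin_two A (hroot i)
  have hli : LinearIndependent K v :=
    Module.End.eigenvectors_linearIndependent' (toLin' A) μ hinj v fun i =>
      ⟨Module.End.mem_eigenspace_iff.mpr (hAv i), hv i⟩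
  refine ⟨basisOfLinearIndependentOfCardEqFinrank hli (by simp), μ, hμ, fun i => ?_⟩
  rw [coe_basisOfLinearIndependentOfCardEqFinrank, hAv]

lemma fixedBy_mk_eq_pair (A : GL (Fin 2) K) (b : Module.Basis (Fin 2) K (Fin 2 → K))
    {μ : Fin 2 → K} (hμ : μ 0 ≠ μ 1)
    (hA : ∀ i, (A : Matrix (Fin 2) (Fin 2) K) *ᵥ b i = μ i • b i) :
    fixedBy (ℙ K (Fin 2 → K)) (ProjGenLinGroup.mk A)
      = {Projectivization.mk K (b 0) (b.ne_zero 0), Projectivization.mk K (b 1) (b.ne_zero 1)} := by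
  ext p
  induction p using Projectivization.ind with
  | h v hv =>
  rw [mem_fixedBy, Projectivization.PGL.mk_smul_mk, Projectivization.mk_eq_mk_iff',
    Set.mem_insert_iff, Set.mem_singleton_iff, Projectivization.mk_eq_mk_iff',
    Projectivization.mk_eq_mk_iff']
  constructor
  · rintro ⟨c, hc⟩
    have hAv : A • v = ∑ i, (μ i * b.repr v i) • b i := by
      conv_lhs => rw [← b.sum_repr v, Finset.smul_sum]
      refine Finset.sum_congr rfl fun i _ => ?_
      rw [smul_comm, mul_comm, mul_smul]
      exact congrArg (b.repr v i • ·) (hA i)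
    have hrepr : ∀ i, (c - μ i) * b.repr v i = 0 := by
      intro i
      have hi := congrArg (fun x => b.repr x i) hc
      simp only [map_smul, Finsupp.smul_apply, smul_eq_mul] at hi
      change _ = b.repr (A • v) i at hi
      rw [sub_mul, sub_eq_zero, hi, hAv, b.repr_sum_self]
    have hv2 : b.repr v 0 • b 0 + b.repr v 1 • b 1 = v := by
      rw [← Fin.sum_univ_two (fun i => b.repr v i • b i), b.sum_repr]
    by_cases h0 : b.repr v 0 = 0
    · exact Or.inr ⟨b.repr v 1, by rwa [h0, zero_smul, zero_add] at hv2⟩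
    · have h1 : b.repr v 1 = 0 := by
        have hc0 : c = μ 0 := by simpa [h0, sub_eq_zero] using hrepr 0
        simpa [hc0, sub_eq_zero, hμ] using hrepr 1
      exact Or.inl ⟨b.repr v 0, by rwa [h1, zero_smul, add_zero] at hv2⟩
  · have heigen : ∀ i, ∀ c : K, c • b i = v → ∃ a : K, a • v = A • v := by
      rintro i c rfl
      exact ⟨μ i, (smul_comm _ _ _).trans
        ((congrArg (c • ·) (hA i).symm).trans (mulVec_smul _ c (b i)).symm)⟩
    rintro (⟨c, hc⟩ | ⟨c, hc⟩)
    exacts [heigen 0 c hc, heigen 1 c hc]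

theorem ncard_fixedBy_projGenLinGroup_fin_two [IsAlgClosed K] [CharZero K] {g : PGL(Fin 2, K)}
    (hg : IsOfFinOrder g) (hg1 : g ≠ 1) : (fixedBy (ℙ K (Fin 2 → K)) g).ncard = 2 := by
  obtain ⟨A, rfl⟩ := ProjGenLinGroup.mk_surjective g
  obtain ⟨n, hn, hAn⟩ := isOfFinOrder_iff_pow_eq_one.mp hg
  rw [← map_pow, ProjGenLinGroup.mk_eq_one,
    GeneralLinearGroup.mem_center_iff_val_mem_range_scalar] at hAn
  rw [Ne, ProjGenLinGroup.mk_eq_one,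
    GeneralLinearGroup.mem_center_iff_val_mem_range_scalar] at hg1
  have hdiscr : (A : Matrix (Fin 2) (Fin 2) K).discr ≠ 0 := fun h0 =>
    (GeneralLinearGroup.IsParabolic.pow ⟨hg1, h0⟩ hn.ne').1 hAn
  obtain ⟨b, μ, hμ, hb⟩ := exists_eigenbasis_of_discr_ne_zero hdiscr
  rw [fixedBy_mk_eq_pair A b hμ hb, Set.ncard_pair]
  rw [Ne, Projectivization.mk_eq_mk_iff']
  rintro ⟨c, hc⟩
  simpa using congrArg (fun x => b.repr x 0) hc

end ProjectiveLine

section TwistedCubic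

open Polynomial
open scoped LinearAlgebra.Projectivization MatrixGroups

section CommRing

variable {R S : Type*} [CommRing R] [CommRing S]

/-- The cubic Veronese map `(s, t) ↦ (s³, s²t, st², t³)`, parametrizing the affine cone over the
twisted cubic. -/
def cubicVeronese (v : Fin 2 → R) : Fin 4 → R :=
  ![v 0 ^ 3, v 0 ^ 2 * v 1, v 0 * v 1 ^ 2, v 1 ^ 3]

lemma map_cubicVeronese (f : R →+* S) (v : Fin 2 → R) (i : Fin 4) :
    f (cubicVeronese v i) = cubicVeronese (f ∘ v) i := by
  fin_cases i <;> simp [cubicVeronese]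

lemma cubicVeronese_smul (c : R) (v : Fin 2 → R) :
    cubicVeronese (c • v) = c ^ 3 • cubicVeronese v := by
  ext i
  fin_cases i <;> simp [cubicVeronese] <;> ring

lemma cubicVeronese_zero : cubicVeronese (0 : Fin 2 → R) = 0 := by
  simpa using cubicVeronese_smul 0 (0 : Fin 2 → R)

lemma smul_cubicVeronese_one_sq (c : R) (v : Fin 2 → R) :
    (c • cubicVeronese v) 1 ^ 2 = (c • cubicVeronese v) 0 * (c • cubicVeronese v) 2 := by
  simp [cubicVeronese]
  ring

lemma smul_cubicVeronese_zero_mul_three (c : R) (v : Fin 2 → R) :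
    (c • cubicVeronese v) 0 * (c • cubicVeronese v) 3 =
      (c • cubicVeronese v) 1 * (c • cubicVeronese v) 2 := by
  simp [cubicVeronese]
  ring

lemma cubicVeronese_ne_zero [IsReduced R] {v : Fin 2 → R} (hv : v ≠ 0) : cubicVeronese v ≠ 0 := by
  contrapose hv
  have h0 : v 0 = 0 := pow_eq_zero_iff three_ne_zero |>.mp (congrFun hv 0)
  have h1 : v 1 = 0 := pow_eq_zero_iff three_ne_zero |>.mp (congrFun hv 3)
  exact funext (Fin.forall_fin_two.mpr ⟨h0, h1⟩)

/-- The symmetric cube of a `2 × 2` matrix, written in the coordinates of `cubicVeronese`. -/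
def symCube : Matrix (Fin 2) (Fin 2) R →* Matrix (Fin 4) (Fin 4) R where
  toFun A :=
    !![A 0 0 ^ 3, 3 * A 0 0 ^ 2 * A 0 1, 3 * A 0 0 * A 0 1 ^ 2, A 0 1 ^ 3;
      A 0 0 ^ 2 * A 1 0, A 0 0 ^ 2 * A 1 1 + 2 * A 0 0 * A 0 1 * A 1 0,
        2 * A 0 0 * A 0 1 * A 1 1 + A 0 1 ^ 2 * A 1 0, A 0 1 ^ 2 * A 1 1;
      A 0 0 * A 1 0 ^ 2, 2 * A 0 0 * A 1 0 * A 1 1 + A 0 1 * A 1 0 ^ 2,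
        A 0 0 * A 1 1 ^ 2 + 2 * A 0 1 * A 1 0 * A 1 1, A 0 1 * A 1 1 ^ 2;
      A 1 0 ^ 3, 3 * A 1 0 ^ 2 * A 1 1, 3 * A 1 0 * A 1 1 ^ 2, A 1 1 ^ 3]
  map_one' := by
    ext i j
    fin_cases i <;> fin_cases j <;> simp
  map_mul' A B := by
    ext i j
    fin_cases i <;> fin_cases j <;>
      simp [mul_apply, Fin.sum_univ_two, Fin.sum_univ_four] <;> ring

lemma symCube_mulVec_cubicVeronese (A : Matrix (Fin 2) (Fin 2) R) (v : Fin 2 → R) :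
    symCube A *ᵥ cubicVeronese v = cubicVeronese (A *ᵥ v) := by
  ext i
  fin_cases i <;>
    simp [symCube, cubicVeronese, mulVec, dotProduct, Fin.sum_univ_two, Fin.sum_univ_four] <;> ring

lemma symCube_scalar (c : R) : symCube (scalar (Fin 2) c) = scalar (Fin 4) (c ^ 3) := by
  ext i j
  fin_cases i <;> fin_cases j <;> simp [symCube] <;> ring

/-- The cubic polynomials in the affine coordinate `s` obtained by applying a matrix to the point
`(s³, s², s, 1)` of the cone over the twisted cubic. -/
noncomputable def cubicRow (M : Matrix (Fin 4) (Fin 4) R) (i : Fin 4) : R[X] :=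
  C (M i 0) * X ^ 3 + C (M i 1) * X ^ 2 + C (M i 2) * X + C (M i 3)

lemma eval_cubicRow (M : Matrix (Fin 4) (Fin 4) R) (i : Fin 4) (s : R) :
    (cubicRow M i).eval s = (M *ᵥ cubicVeronese ![s, 1]) i := by
  simp [cubicRow, cubicVeronese, mulVec, dotProduct, Fin.sum_univ_four]

lemma cubicRow_injective {M N : Matrix (Fin 4) (Fin 4) R} {i : Fin 4}
    (h : cubicRow M i = cubicRow N i) : M i = N i := by
  have hcoeff (n : ℕ) : (cubicRow M i).coeff n = (cubicRow N i).coeff n := by rw [h]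
  ext j
  fin_cases j
  · simpa [cubicRow, coeff_X, coeff_C] using hcoeff 3
  · simpa [cubicRow, coeff_X, coeff_C] using hcoeff 2
  · simpa [cubicRow, coeff_X, coeff_C] using hcoeff 1
  · simpa [cubicRow, coeff_X, coeff_C] using hcoeff 0

lemma ext_of_mulVec_cubicVeronese [IsDomain R] [Infinite R] {M N : Matrix (Fin 4) (Fin 4) R}
    (h : ∀ s, M *ᵥ cubicVeronese ![s, 1] = N *ᵥ cubicVeronese ![s, 1]) : M = N :=
  funext fun _ => cubicRow_injective <| Polynomial.funext fun s => by
    rw [eval_cubicRow, eval_cubicRow, h]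

/-- The equations of the twisted cubic parametrize: this is where unique factorization enters. -/
lemma exists_eq_smul_cubicVeronese [IsDomain R] [UniqueFactorizationMonoid R] {P : Fin 4 → R}
    (h0 : P 0 ≠ 0) (h12 : P 1 ^ 2 = P 0 * P 2) (h03 : P 0 * P 3 = P 1 * P 2) :
    ∃ (k : R) (v : Fin 2 → R), P = k • cubicVeronese v := by
  obtain ⟨b, a, d, hab, hP1, hP0⟩ :=
    UniqueFactorizationMonoid.exists_reduced_factors' (P 1) (P 0) h0
  have ha (n : ℕ) : IsRelPrime a (b ^ n) := hab.symm.pow_right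
  have hd0 : d ≠ 0 := left_ne_zero_of_mul (hP0 ▸ h0)
  have ha0 : a ≠ 0 := right_ne_zero_of_mul (hP0 ▸ h0)
  have hdb : d * b ^ 2 = a * P 2 := mul_left_cancel₀ hd0 (by
    rw [← hP0, ← hP1] at h12
    linear_combination h12)
  obtain ⟨e, rfl⟩ : a ∣ d := (ha 2).dvd_of_dvd_mul_right ⟨_, hdb⟩
  have hP2 : P 2 = e * b ^ 2 := mul_left_cancel₀ ha0 (by linear_combination -hdb)
  have heb : e * b ^ 3 = a * P 3 := mul_left_cancel₀ hd0 (by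
    rw [← hP0, ← hP1, hP2] at h03
    linear_combination -h03)
  obtain ⟨k, rfl⟩ : a ∣ e := (ha 3).dvd_of_dvd_mul_right ⟨_, heb⟩
  have hP3 : P 3 = k * b ^ 3 := mul_left_cancel₀ ha0 (by linear_combination -heb)
  refine ⟨k, ![a, b], ?_⟩
  ext i
  fin_cases i
  · simp [cubicVeronese, ← hP0]
    ring
  · simp [cubicVeronese, ← hP1]
    ring
  · simp [cubicVeronese, hP2]
    ring
  · simp [cubicVeronese, hP3]

end CommRing

section Field

variable {K : Type*} [Field K]

lemma isUnit_of_isUnit_symCube {A : Matrix (Fin 2) (Fin 2) K} (hA : IsUnit (symCube A)) :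
    IsUnit A := by
  rw [isUnit_iff_isUnit_det, isUnit_iff_ne_zero]
  intro hdet
  obtain ⟨v, hv, hAv⟩ := exists_mulVec_eq_zero_iff.mpr hdet
  refine cubicVeronese_ne_zero hv (mulVec_injective_of_isUnit hA ?_)
  simp only [symCube_mulVec_cubicVeronese, hAv, mulVec_zero, cubicVeronese_zero]

lemma natDegree_le_one_of_cubicRow_eq {M : Matrix (Fin 4) (Fin 4) K} {i : Fin 4} {k : K}
    (hk : k ≠ 0) {p : K[X]} (h : cubicRow M i = C k * p ^ 3) : p.natDegree ≤ 1 := by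
  have hdeg : (cubicRow M i).natDegree ≤ 3 := natDegree_cubic_le
  rw [h, natDegree_C_mul hk, natDegree_pow] at hdeg
  omega

variable [IsAlgClosed K]

lemma exists_cubicRow_eq_smul_cubicVeronese {M : Matrix (Fin 4) (Fin 4) K} (hM : IsUnit M)
    (hcone : ∀ v, ∃ (c : K) (w : Fin 2 → K), M *ᵥ cubicVeronese v = c • cubicVeronese w) :
    ∃ (k : K) (v : Fin 2 → K[X]), cubicRow M = C k • cubicVeronese v := by
  have heval (s : K) : ∃ (c : K) (w : Fin 2 → K), ∀ i,
      (cubicRow M i).eval s = (c • cubicVeronese w) i := by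
    obtain ⟨c, w, h⟩ := hcone ![s, 1]
    exact ⟨c, w, fun i => by rw [eval_cubicRow, h]⟩
  have h0 : cubicRow M 0 ≠ 0 := by
    intro h0
    have hrow : M 0 = (0 : Matrix (Fin 4) (Fin 4) K) 0 :=
      cubicRow_injective (by rw [h0]; simp [cubicRow])
    exact ((isUnit_iff_isUnit_det M).mp hM).ne_zero
      (det_eq_zero_of_row_eq_zero 0 (congrFun hrow))
  obtain ⟨k, v, hkv⟩ := exists_eq_smul_cubicVeronese (P := cubicRow M) h0
    (Polynomial.funext fun s => by
      obtain ⟨c, w, h⟩ := heval s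
      simp only [eval_pow, eval_mul, h, smul_cubicVeronese_one_sq])
    (Polynomial.funext fun s => by
      obtain ⟨c, w, h⟩ := heval s
      simp only [eval_mul, h, smul_cubicVeronese_zero_mul_three])
  have hk : k.degree = 0 := by
    by_contra hdeg
    obtain ⟨s, hs⟩ := IsAlgClosed.exists_root k hdeg
    have hMs : M *ᵥ cubicVeronese ![s, 1] = M *ᵥ 0 := by
      ext i
      rw [← eval_cubicRow, hkv, mulVec_zero, Pi.smul_apply, smul_eq_mul, eval_mul, hs.eq_zero,
        zero_mul, Pi.zero_apply]
    exact cubicVeronese_ne_zero (by simp) (mulVec_injective_of_isUnit hM hMs)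
  exact ⟨k.coeff 0, v, by rw [hkv, ← eq_C_of_degree_eq_zero hk]⟩

theorem exists_symCube_eq {M : Matrix (Fin 4) (Fin 4) K} (hM : IsUnit M)
    (hcone : ∀ v, ∃ (c : K) (w : Fin 2 → K), M *ᵥ cubicVeronese v = c • cubicVeronese w) :
    ∃ A, symCube A = M := by
  obtain ⟨k, v, hkv⟩ := exists_cubicRow_eq_smul_cubicVeronese hM hcone
  have hk : k ≠ 0 := by
    rintro rfl
    have hM0 : M = 0 := funext fun i => cubicRow_injective (by
      rw [hkv]
      simp [cubicRow])
    exact hM.ne_zero hM0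
  have hdeg : ∀ i, (v i).natDegree ≤ 1 := Fin.forall_fin_two.mpr
    ⟨natDegree_le_one_of_cubicRow_eq hk (congrFun hkv 0),
      natDegree_le_one_of_cubicRow_eq hk (congrFun hkv 3)⟩
  obtain ⟨c, rfl⟩ := IsAlgClosed.exists_pow_nat_eq k three_pos
  let A : Matrix (Fin 2) (Fin 2) K := of fun i => ![(v i).coeff 1, (v i).coeff 0]
  have hA (s : K) : A *ᵥ ![s, 1] = eval s ∘ v := by
    ext i
    have hvi := congrArg (eval s) (eq_X_add_C_of_natDegree_le_one (hdeg i))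
    simpa [A, mulVec, dotProduct, Fin.sum_univ_two] using hvi.symm
  refine ⟨c • A, ext_of_mulVec_cubicVeronese fun s => ?_⟩
  ext i
  rw [symCube_mulVec_cubicVeronese, smul_mulVec, cubicVeronese_smul, hA, ← eval_cubicRow, hkv]
  have hmap : eval s (cubicVeronese v i) = cubicVeronese (eval s ∘ v) i :=
    map_cubicVeronese (evalRingHom s) v i
  simp [hmap]

end Field

section Projective

variable {K : Type*} [Field K]

/-- The parametrization `ℙ¹ → ℙ³` of the twisted cubic. -/
noncomputable def twistedCubicMap (p : ℙ K (Fin 2 → K)) : ℙ K (Fin 4 → K) :=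
  Projectivization.mk K (cubicVeronese p.rep) (cubicVeronese_ne_zero p.rep_nonzero)

lemma twistedCubicMap_mk {v : Fin 2 → K} (hv : v ≠ 0) :
    twistedCubicMap (Projectivization.mk K v hv) =
      Projectivization.mk K (cubicVeronese v) (cubicVeronese_ne_zero hv) := by
  obtain ⟨a, ha⟩ := Projectivization.exists_smul_eq_mk_rep K v hv
  rw [twistedCubicMap, Projectivization.mk_eq_mk_iff']
  exact ⟨(a : K) ^ 3, by rw [← ha, Units.smul_def, cubicVeronese_smul]⟩

/-- The symmetric cube representation of `GL₂`. -/
def symCubeGL : GL (Fin 2) K →* GL (Fin 4) K := Units.map symCube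

lemma symCubeGL_smul_cubicVeronese (A : GL (Fin 2) K) (v : Fin 2 → K) :
    symCubeGL A • cubicVeronese v = cubicVeronese (A • v) :=
  symCube_mulVec_cubicVeronese _ v

lemma symCubeGL_smul_twistedCubicMap (A : GL (Fin 2) K) (p : ℙ K (Fin 2 → K)) :
    symCubeGL A • twistedCubicMap p = twistedCubicMap (A • p) := by
  induction p using Projectivization.ind with
  | h v hv =>
  simp only [Projectivization.smul_mk, twistedCubicMap_mk, symCubeGL_smul_cubicVeronese]

theorem mem_range_symCubeGL [IsAlgClosed K] {M : GL (Fin 4) K}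
    (hM : ∀ p, M • twistedCubicMap p ∈ Set.range (twistedCubicMap (K := K))) :
    M ∈ symCubeGL.range := by
  obtain ⟨A, hA⟩ := exists_symCube_eq M.isUnit fun v => by
    by_cases hv : v = 0
    · exact ⟨0, 0, by rw [hv, cubicVeronese_zero, mulVec_zero, zero_smul]⟩
    · obtain ⟨p, hp⟩ := hM (Projectivization.mk K v hv)
      rw [twistedCubicMap_mk, Projectivization.smul_mk, twistedCubicMap, eq_comm,
        Projectivization.mk_eq_mk_iff'] at hp
      obtain ⟨c, hc⟩ := hp
      exact ⟨c, p.rep, hc.symm⟩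
  obtain ⟨A, rfl⟩ := isUnit_of_isUnit_symCube (hA ▸ M.isUnit)
  exact ⟨A, Units.ext hA⟩

lemma symCubeGL_mem_center_iff {A : GL (Fin 2) K} :
    symCubeGL A ∈ Subgroup.center (GL (Fin 4) K) ↔ A ∈ Subgroup.center (GL (Fin 2) K) := by
  rw [GeneralLinearGroup.mem_center_iff_val_mem_range_scalar,
    GeneralLinearGroup.mem_center_iff_val_mem_range_scalar]
  constructor
  · rintro ⟨c, hc⟩
    have hentry (i j : Fin 4) : scalar (Fin 4) c i j = symCube A.1 i j := congrFun₂ hc i j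
    have h01 : A.1 0 1 = 0 := by simpa [symCube, eq_comm (a := (0 : K))] using hentry 0 3
    have h10 : A.1 1 0 = 0 := by simpa [symCube, eq_comm (a := (0 : K))] using hentry 3 0
    have h00 : A.1 0 0 ^ 3 = c := by simpa [symCube, eq_comm] using hentry 0 0
    have h11 : A.1 0 0 ^ 2 * A.1 1 1 = c := by simpa [symCube, h01, eq_comm] using hentry 1 1
    have hne : A.1 0 0 ≠ 0 := by
      intro h
      apply ((isUnit_iff_isUnit_det A.1).mp A.isUnit).ne_zero
      rw [det_fin_two, h, h01, zero_mul, zero_mul, sub_zero]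
    have hdiag : A.1 1 1 = A.1 0 0 := mul_left_cancel₀ (pow_ne_zero 2 hne) (by
      rw [h11, ← h00, pow_succ])
    refine ⟨A.1 0 0, ?_⟩
    ext i j
    fin_cases i <;> fin_cases j <;> simp [h01, h10, hdiag]
  · rintro ⟨c, hc⟩
    exact ⟨c ^ 3, by rw [← symCube_scalar, hc]; rfl⟩

/-- The projective symmetric cube, by which `PGL₂` acts on the twisted cubic. -/
def symCubePGL : PGL(Fin 2, K) →* PGL(Fin 4, K) :=
  ProjGenLinGroup.lift (ProjGenLinGroup.mk.comp symCubeGL) <| MonoidHom.ext fun u =>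
    ProjGenLinGroup.mk_eq_one.mpr <| symCubeGL_mem_center_iff.mpr <|
      ProjGenLinGroup.mk_eq_one.mp <| ProjGenLinGroup.mk_scalar u

lemma symCubePGL_comp_mk :
    symCubePGL.comp ProjGenLinGroup.mk = ProjGenLinGroup.mk.comp (symCubeGL (K := K)) :=
  ProjGenLinGroup.lift_comp_mk _

lemma symCubePGL_injective : Function.Injective (symCubePGL (K := K)) := by
  rw [injective_iff_map_eq_one]
  intro g hg
  induction g using ProjGenLinGroup.induction_on with | mk A =>
  change ProjGenLinGroup.mk (symCubeGL A) = 1 at hg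
  rwa [ProjGenLinGroup.mk_eq_one, symCubeGL_mem_center_iff, ← ProjGenLinGroup.mk_eq_one] at hg

lemma twistedCubic_eq_range_twistedCubicMap : twistedCubic = Set.range twistedCubicMap := by
  ext p
  constructor
  · rintro ⟨s, t, h, rfl⟩
    have hst : (![s, t] : Fin 2 → ℂ) ≠ 0 := by
      rintro h0
      exact h ((congrArg cubicVeronese h0).trans cubicVeronese_zero)
    exact ⟨Projectivization.mk ℂ ![s, t] hst, twistedCubicMap_mk hst⟩
  · rintro ⟨p, rfl⟩
    exact ⟨p.rep 0, p.rep 1, cubicVeronese_ne_zero p.rep_nonzero, rfl⟩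

end Projective

end TwistedCubic

section Orbits

open scoped LinearAlgebra.Projectivization

variable {G K V : Type*} [Group G] [DivisionRing K] [AddCommGroup V] [Module K V]
  [DistribMulAction G V] [SMulCommClass G K V]

lemma exists_rep_smul_eq_smul_smul_rep (g : G) (p : ℙ K V) :
    ∃ a : Kˣ, (g • p).rep = a • g • p.rep := by
  obtain ⟨a, ha⟩ := Projectivization.exists_smul_eq_mk_rep K (g • p.rep)
    ((smul_ne_zero_iff_ne g).mpr p.rep_nonzero)
  rw [← Projectivization.smul_mk g p.rep_nonzero, p.mk_rep] at ha
  exact ⟨a, ha.symm⟩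

theorem finrank_le_ncard_of_irreducible {T : Set (ℙ K V)} (hfin : T.Finite) (hne : T.Nonempty)
    (hT : ∀ g : G, ∀ p ∈ T, g • p ∈ T)
    (hirr : ∀ W : Submodule K V, (∀ g : G, ∀ v ∈ W, g • v ∈ W) → W = ⊥ ∨ W = ⊤) :
    Module.finrank K V ≤ T.ncard := by
  set W : Submodule K V := Submodule.span K (Projectivization.rep '' T)
  have hrep (p) (hp : p ∈ T) : p.rep ∈ W := Submodule.subset_span ⟨p, hp, rfl⟩
  have hW : ∀ g : G, ∀ v ∈ W, g • v ∈ W := by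
    intro g v hv
    have hmap : W ≤ W.comap (DistribMulAction.toModuleEnd K V g) := by
      refine Submodule.span_le.mpr ?_
      rintro _ ⟨p, hp, rfl⟩
      obtain ⟨a, ha⟩ := exists_rep_smul_eq_smul_smul_rep g p
      have hgp : a • g • p.rep ∈ W := ha ▸ hrep _ (hT g p hp)
      exact (W.smul_mem_iff' a).mp hgp
    exact hmap hv
  rcases hirr W hW with hbot | htop
  · obtain ⟨p, hp⟩ := hne
    exact absurd ((Submodule.mem_bot K).mp (hbot ▸ hrep p hp)) p.rep_nonzero
  · have hfinImage : (Projectivization.rep '' T).Finite := hfin.image _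
    calc Module.finrank K V = Module.finrank K W := by rw [htop, finrank_top]
      _ ≤ (Projectivization.rep '' T).ncard := by
        have := hfinImage.fintype
        rw [Set.ncard_eq_toFinset_card']
        exact finrank_span_le_card _
      _ ≤ T.ncard := Set.ncard_image_le hfin

end Orbits

section Semiinvariants

open MulAction MvPolynomial

lemma exists_monoidHom_units_of_orbit {G X K : Type*} [Group G] [MulAction G X] [Field K]
    {f : X → K} {x : X} (hx : f x ≠ 0)
    (hf : ∀ g : G, ∃ c, ∀ y ∈ orbit G x, f (g • y) = c * f y) :
    ∃ χ : G →* Kˣ, ∀ g, f (g • x) = χ g * f x := by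
  choose c hc using hf
  have hcx (g : G) : f (g • x) = c g * f x := hc g x (mem_orbit_self x)
  let χ : G →* K :=
    { toFun := c
      map_one' := mul_right_cancel₀ hx (by rw [← hcx, one_smul, one_mul])
      map_mul' := fun g h => mul_right_cancel₀ hx (by
        rw [← hcx, mul_smul, hc g _ (mem_orbit x h), hcx, mul_assoc]) }
  exact ⟨χ.toHomUnits, hcx⟩

variable {n K : Type*} [Fintype n] [DecidableEq n] [Field K]

/-- A polynomial `Q` on `Kⁿ` is a semi-invariant of `G ≤ GLₙ(K)` if `Q(g⁻¹ v) = χ(g) Q(v)` for some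
character `χ` of `G`. -/
def IsSemiinvariant (G : Subgroup (GL n K)) (Q : MvPolynomial n K) : Prop :=
  ∃ χ : G →* Kˣ, ∀ (g : G) (v : n → K), eval (g⁻¹ • v) Q = χ g * eval v Q

/-- Averaging `χ(h)⁻¹ q(h v)` over the group turns a form that is semi-invariant along one orbit
into a form that is semi-invariant everywhere. -/
theorem exists_isSemiinvariant_of_orbit [CharZero K] {G : Subgroup (GL n K)} [Finite G]
    {q : MvPolynomial n K} {d : ℕ} (hq : q.IsHomogeneous d) {x : n → K} (hx : eval x q ≠ 0)
    {χ : G →* Kˣ} (hχ : ∀ g : G, eval (g • x) q = χ g * eval x q) :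
    ∃ Q : MvPolynomial n K, Q.IsHomogeneous d ∧ IsSemiinvariant G Q ∧ Q ≠ 0 := by
  have := Fintype.ofFinite G
  let M (g : G) : Matrix n n K := (g : GL n K)
  let Q : MvPolynomial n K := ∑ h : G, C (((χ h)⁻¹ : Kˣ) : K) * aeval (M h).toMvPolynomial q
  have hQ (v : n → K) : eval v Q = ∑ h : G, (((χ h)⁻¹ : Kˣ) : K) * eval (h • v) q := by
    have heval (h : G) : eval v (aeval (M h).toMvPolynomial q) = eval (h • v) q := by
      rw [map_aeval]
      exact eval₂Hom_congr (RingHom.ext fun a => eval_C a)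
        (funext fun i => (M h).toMvPolynomial_eval_eq_apply i v) rfl
    simp only [Q, map_sum, map_mul, eval_C, heval]
  refine ⟨Q, ?_, ⟨χ⁻¹, fun g v => ?_⟩, fun h0 => ?_⟩
  · refine IsHomogeneous.sum _ _ _ fun h _ => ?_
    have haeval := hq.aeval (M h).toMvPolynomial (M h).toMvPolynomial_isHomogeneous
    simpa using (isHomogeneous_C n _).mul haeval
  · rw [hQ, hQ, Finset.mul_sum, ← Equiv.sum_comp (Equiv.mulRight g)]
    refine Finset.sum_congr rfl fun h _ => ?_
    rw [Equiv.coe_mulRight, smul_smul, mul_inv_cancel_right, map_mul, _root_.mul_inv_rev,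
      MonoidHom.inv_apply, Units.val_mul, mul_assoc]
  · have hsum : eval x Q = Nat.card G * eval x q := by
      simp [hQ, hχ]
    rw [h0, map_zero, eq_comm, mul_eq_zero] at hsum
    exact hsum.elim (Nat.cast_ne_zero.mpr Nat.card_pos.ne') hx

end Semiinvariants

section BinaryForms

open MulAction MvPolynomial
open scoped LinearAlgebra.Projectivization MatrixGroups

/-- The bracket `[w, v]` of classical invariant theory: the determinant with rows `w` and `v`. -/
def bracket {R : Type*} [CommRing R] (w v : Fin 2 → R) : R := w 0 * v 1 - w 1 * v 0

lemma bracket_mulVec {R : Type*} [CommRing R] (A : Matrix (Fin 2) (Fin 2) R) (w v : Fin 2 → R) :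
    bracket (A *ᵥ w) (A *ᵥ v) = A.det * bracket w v := by
  simp [bracket, mulVec, dotProduct, Fin.sum_univ_two, det_fin_two]
  ring

lemma exists_isHomogeneous_eval_cubicVeronese {ι R : Type*} [CommRing R] (w : ι → Fin 2 → R)
    {d : ℕ} {S : Finset ι} (hS : S.card = 3 * d) :
    ∃ q : MvPolynomial (Fin 4) R, q.IsHomogeneous d ∧
      ∀ v, eval (cubicVeronese v) q = ∏ i ∈ S, bracket (w i) v := by
  classical
  induction d generalizing S with
  | zero =>
    obtain rfl := Finset.card_eq_zero.mp hS
    exact ⟨1, isHomogeneous_one _ _, by simp⟩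
  | succ d ih =>
    obtain ⟨T, hTS, hT⟩ := Finset.exists_subset_card_eq (s := S) (n := 3) (by omega)
    obtain ⟨q, hq, hqv⟩ := ih (S := S \ T) (by rw [Finset.card_sdiff_of_subset hTS]; omega)
    obtain ⟨l, hl, hlv⟩ : ∃ l : MvPolynomial (Fin 4) R, l.IsHomogeneous 1 ∧
        ∀ v, eval (cubicVeronese v) l = ∏ i ∈ T, bracket (w i) v := by
      obtain ⟨i, j, k, hij, hik, hjk, rfl⟩ := Finset.card_eq_three.mp hT
      let u : Fin 4 → R := ![-(w i 1 * w j 1 * w k 1),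
        w i 0 * w j 1 * w k 1 + w i 1 * w j 0 * w k 1 + w i 1 * w j 1 * w k 0,
        -(w i 0 * w j 0 * w k 1 + w i 0 * w j 1 * w k 0 + w i 1 * w j 0 * w k 0),
        w i 0 * w j 0 * w k 0]
      refine ⟨∑ a, C (u a) * X a,
        IsHomogeneous.sum _ _ _ fun a _ => isHomogeneous_C_mul_X _ _, fun v => ?_⟩
      rw [Finset.prod_insert (by simp [hij, hik]), Finset.prod_insert (by simp [hjk]),
        Finset.prod_singleton]
      simp [u, bracket, cubicVeronese, Fin.sum_univ_four]
      ring
    refine ⟨q * l, hq.mul hl, fun v => ?_⟩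
    rw [map_mul, hqv, hlv, Finset.prod_sdiff hTS]

variable {K : Type*} [Field K]

lemma exists_prod_bracket_ne_zero [Infinite K] {ι : Type*} (S : Finset ι) {w : ι → Fin 2 → K}
    (hw : ∀ i ∈ S, w i ≠ 0) : ∃ v, ∏ i ∈ S, bracket (w i) v ≠ 0 := by
  let P : Polynomial K := ∏ i ∈ S, (Polynomial.C (w i 0) - Polynomial.C (w i 1) * Polynomial.X)
  have hP : P ≠ 0 := Finset.prod_ne_zero_iff.mpr fun i hi h0 => hw i hi <| by
    have hcoeff (m : ℕ) := congrArg (Polynomial.coeff · m) h0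
    refine funext (Fin.forall_fin_two.mpr ⟨?_, ?_⟩)
    · simpa using hcoeff 0
    · simpa [Polynomial.coeff_C] using hcoeff 1
  by_contra! hv
  refine hP (Polynomial.funext fun z => ?_)
  simpa [P, Polynomial.eval_prod, bracket] using hv ![z, 1]

lemma exists_prod_bracket_smul (A : GL (Fin 2) K) {S : Finset (ℙ K (Fin 2 → K))}
    (hS : ∀ p ∈ S, A • p ∈ S) :
    ∃ c, ∀ v, ∏ p ∈ S, bracket p.rep (A • v) = c * ∏ p ∈ S, bracket p.rep v := by
  choose a ha using fun p : ℙ K (Fin 2 → K) => exists_rep_smul_eq_smul_smul_rep A p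
  have hbracket (p : ℙ K (Fin 2 → K)) (v : Fin 2 → K) :
      bracket (A • p).rep (A • v) = a p * A.1.det * bracket p.rep v := by
    rw [mul_assoc, ← bracket_mulVec, ha]
    change bracket ((a p : K) • A.1 *ᵥ p.rep) (A.1 *ᵥ v) = _
    simp only [bracket, Pi.smul_apply, smul_eq_mul]
    ring
  have hperm : Set.BijOn (A • ·) (S : Set (ℙ K (Fin 2 → K))) S :=
    (Finset.finite_toSet S).injOn_iff_bijOn_of_mapsTo hS |>.mp (MulAction.injective A).injOn
  refine ⟨∏ p ∈ S, ((a p : K) * A.1.det), fun v => ?_⟩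
  calc ∏ p ∈ S, bracket p.rep (A • v) = ∏ p ∈ S, bracket (A • p).rep (A • v) :=
        (Finset.prod_nbij (A • ·) hS hperm.injOn hperm.surjOn fun _ _ => rfl).symm
    _ = _ := by rw [← Finset.prod_mul_distrib, Finset.prod_congr rfl fun p _ => hbracket p v]

end BinaryForms

section Reduction

open MulAction MvPolynomial
open scoped LinearAlgebra.Projectivization MatrixGroups

variable {K : Type*} [Field K]

lemma orbit_map_mk {n : Type*} [Fintype n] [DecidableEq n] (L : Subgroup (GL n K))
    (p : ℙ K (n → K)) : orbit (L.map ProjGenLinGroup.mk) p = orbit L p := by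
  ext y
  constructor
  · rintro ⟨⟨_, A, hA, rfl⟩, rfl⟩
    exact ⟨⟨A, hA⟩, rfl⟩
  · rintro ⟨⟨A, hA⟩, rfl⟩
    exact ⟨⟨_, A, hA, rfl⟩, rfl⟩

variable {G : Subgroup (GL (Fin 4) K)}

lemma four_le_ncard_orbit (hG : G ≤ symCubeGL.range)
    (hirr : ∀ W : Submodule K (Fin 4 → K), (∀ g : G, ∀ v ∈ W, g • v ∈ W) → W = ⊥ ∨ W = ⊤)
    {p : ℙ K (Fin 2 → K)} (hp : (orbit (G.comap symCubeGL) p).Finite) :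
    4 ≤ (orbit (G.comap symCubeGL) p).ncard := by
  have hinv : ∀ g : G, ∀ y ∈ twistedCubicMap '' orbit (G.comap symCubeGL) p,
      g • y ∈ twistedCubicMap '' orbit (G.comap symCubeGL) p := by
    rintro ⟨g, hg⟩ _ ⟨y, hy, rfl⟩
    obtain ⟨A, rfl⟩ := hG hg
    exact ⟨A • y, mem_orbit_of_mem_orbit (⟨A, hg⟩ : G.comap symCubeGL) hy,
      (symCubeGL_smul_twistedCubicMap A y).symm⟩
  calc 4 = Module.finrank K (Fin 4 → K) := by simp
    _ ≤ (twistedCubicMap '' orbit (G.comap symCubeGL) p).ncard :=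
      finrank_le_ncard_of_irreducible (hp.image _) ((nonempty_orbit p).image _) hinv hirr
    _ ≤ (orbit (G.comap symCubeGL) p).ncard := Set.ncard_image_le hp

/-- The points of an orbit of `3 * d` elements are the zeros of a binary form of degree `3 * d`,
which is the restriction to the twisted cubic of a form of degree `d`. -/
lemma ncard_orbit_ne_three_mul [CharZero K] [Finite G] (hG : G ≤ symCubeGL.range) {d : ℕ}
    (hd : ∀ Q : MvPolynomial (Fin 4) K, Q.IsHomogeneous d → IsSemiinvariant G Q → Q = 0)
    {p : ℙ K (Fin 2 → K)} (hp : (orbit (G.comap symCubeGL) p).Finite) :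
    (orbit (G.comap symCubeGL) p).ncard ≠ 3 * d := by
  intro hcard
  rw [Set.ncard_eq_toFinset_card _ hp] at hcard
  obtain ⟨q, hq, hqv⟩ := exists_isHomogeneous_eval_cubicVeronese Projectivization.rep hcard
  obtain ⟨v, hv⟩ := exists_prod_bracket_ne_zero hp.toFinset
    (w := Projectivization.rep) fun y _ => y.rep_nonzero
  have hfactor (g : G) : ∃ c, ∀ y ∈ orbit G (cubicVeronese v), eval (g • y) q = c * eval y q := by
    obtain ⟨g, hg⟩ := g
    obtain ⟨A, rfl⟩ := hG hg
    obtain ⟨c, hc⟩ := exists_prod_bracket_smul A (S := hp.toFinset) fun y hy =>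
      hp.mem_toFinset.mpr <|
        mem_orbit_of_mem_orbit (⟨A, hg⟩ : G.comap symCubeGL) (hp.mem_toFinset.mp hy)
    refine ⟨c, ?_⟩
    rintro _ ⟨⟨h, hh⟩, rfl⟩
    obtain ⟨B, rfl⟩ := hG hh
    simp only [Subgroup.mk_smul, symCubeGL_smul_cubicVeronese, hqv, hc]
  obtain ⟨χ, hχ⟩ := exists_monoidHom_units_of_orbit (f := (eval · q)) (hqv v ▸ hv) hfactor
  obtain ⟨Q, hQ, hQG, hQ0⟩ := exists_isSemiinvariant_of_orbit hq (hqv v ▸ hv) hχ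
  exact hQ0 (hd Q hQ hQG)

end Reduction

section Main

open MulAction
open scoped LinearAlgebra.Projectivization MatrixGroups

theorem stmt_8_general {K : Type*} [Field K] [IsAlgClosed K] [CharZero K]
    {G : Subgroup (GL (Fin 4) K)} [Finite G]
    (hirr : ∀ W : Submodule K (Fin 4 → K), (∀ g : G, ∀ v ∈ W, g • v ∈ W) → W = ⊥ ∨ W = ⊤)
    (hquad : ∀ Q : MvPolynomial (Fin 4) K, Q.IsHomogeneous 2 → IsSemiinvariant G Q → Q = 0)
    (hcubic : ∀ g ∈ G, ∀ p, g • twistedCubicMap p ∈ Set.range (twistedCubicMap (K := K))) :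
    Nonempty (G.map ProjGenLinGroup.mk ≃* alternatingGroup (Fin 5)) := by
  have hG : G ≤ symCubeGL.range := fun g hg => mem_range_symCubeGL (hcubic g hg)
  let H : Subgroup PGL(Fin 2, K) := (G.comap symCubeGL).map ProjGenLinGroup.mk
  have hHG : H.map symCubePGL = G.map ProjGenLinGroup.mk := by
    rw [Subgroup.map_map, symCubePGL_comp_mk, ← Subgroup.map_map, Subgroup.map_comap_eq_self hG]
  let e : H ≃* G.map ProjGenLinGroup.mk :=
    (H.equivMapOfInjective symCubePGL symCubePGL_injective).trans (MulEquiv.subgroupCongr hHG)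
  have : Finite (G.map ProjGenLinGroup.mk) :=
    Finite.of_surjective _ (ProjGenLinGroup.mk.subgroupMap_surjective G)
  have : Finite H := Finite.of_equiv _ e.symm.toEquiv
  have hfixed : FixesTwoPoints H (ℙ K (Fin 2 → K)) := fun h hh =>
    ncard_fixedBy_projGenLinGroup_fin_two (H.isOfFinOrder_coe.mpr (isOfFinOrder_of_finite h))
      (by simpa using hh)
  have hfin (p : ℙ K (Fin 2 → K)) : (orbit (G.comap symCubeGL) p).Finite :=
    orbit_map_mk (G.comap symCubeGL) p ▸ Set.finite_range _
  obtain ⟨f⟩ := hfixed.nonempty_mulEquiv_alternatingGroup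
    (fun p => by
      rw [orbit_map_mk]
      exact (Nat.le_succ 3).trans (four_le_ncard_orbit hG hirr (hfin p)))
    (fun p => by
      rw [orbit_map_mk]
      exact ncard_orbit_ne_three_mul hG hquad (hfin p))
  exact ⟨e.symm.trans f⟩

end Main

/-- If a finite irreducible subgroup `G ≤ SL(4, ℂ)` without nonzero degree-2
homogeneous semi-invariants maps the twisted cubic onto itself (projectively), then its image
`Ḡ` in `PGL(4, ℂ)` is isomorphic to `A₅`. -/
theorem stmt_8 (G : Subgroup (SpecialLinearGroup (Fin 4) ℂ)) (hGfin : Finite G)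
    (hirr : ∀ W : Submodule ℂ (Fin 4 → ℂ),
      (∀ g ∈ G, ∀ v ∈ W, Matrix.mulVec (g : Matrix (Fin 4) (Fin 4) ℂ) v ∈ W) →
      W = ⊥ ∨ W = ⊤)
    (hnoquad : ∀ Q : MvPolynomial (Fin 4) ℂ, Q.IsHomogeneous 2 →
      (∃ χ : G →* ℂˣ, ∀ (g : G) (v : Fin 4 → ℂ),
        MvPolynomial.eval
            (Matrix.mulVec
              (((g : SpecialLinearGroup (Fin 4) ℂ)⁻¹ : SpecialLinearGroup (Fin 4) ℂ) :
                Matrix (Fin 4) (Fin 4) ℂ) v) Q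
          = (χ g : ℂ) * MvPolynomial.eval v Q) →
      Q = 0)
    (hC : ∀ g ∈ G, ∀ (v : Fin 4 → ℂ) (hv : v ≠ 0)
      (hgv : Matrix.mulVec (g : Matrix (Fin 4) (Fin 4) ℂ) v ≠ 0),
      Projectivization.mk ℂ v hv ∈ twistedCubic →
      Projectivization.mk ℂ (Matrix.mulVec (g : Matrix (Fin 4) (Fin 4) ℂ) v) hgv ∈ twistedCubic)
    (Gbar : Subgroup (GL (Fin 4) ℂ ⧸ Subgroup.center (GL (Fin 4) ℂ)))
    (hGbar : Gbar = Subgroup.map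
      ((QuotientGroup.mk' (Subgroup.center (GL (Fin 4) ℂ))).comp
        SpecialLinearGroup.toGL) G) :
    Nonempty (Gbar ≃* alternatingGroup (Fin 5)) := by
  let f : G ≃* G.map SpecialLinearGroup.toGL :=
    G.equivMapOfInjective _ SpecialLinearGroup.toGL_injective
  have := Finite.of_equiv _ f.toEquiv
  have hPGL : (G.map SpecialLinearGroup.toGL).map ProjGenLinGroup.mk = Gbar := by
    rw [hGbar, Subgroup.map_map]
    rfl
  rw [← hPGL]
  refine stmt_8_general ?_ ?_ ?_
  · exact fun W hW => hirr W fun g hg => hW ⟨_, g, hg, rfl⟩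
  · rintro Q hQ ⟨χ, hχ⟩
    exact hnoquad Q hQ ⟨χ.comp f, fun g => hχ (f g)⟩
  · rintro _ ⟨g, hg, rfl⟩ p
    rw [← twistedCubic_eq_range_twistedCubicMap]
    have hp : twistedCubicMap p ∈ twistedCubic :=
      twistedCubic_eq_range_twistedCubicMap ▸ Set.mem_range_self p
    exact hC g hg _ _ (smul_ne_zero_iff_ne (SpecialLinearGroup.toGL g) |>.mpr
      (cubicVeronese_ne_zero p.rep_nonzero)) hp
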